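/- Let K > 0 and N ∈ [13,∞). Then λ[h_{K,N,D_{K,N}/2}] < λ[h_{K,N,D_{K,N}}]. In particular, for K > 0 the map (0, D_{K,N}] ∋ D ↦ λ[h_{K,N,D}] is not non-increasing. -/

import Mathlib

open MeasureTheory Filter

/-- The function `s_κ` from the paper. -/
noncomputable def sKappa (κ θ : ℝ) : ℝ :=
  if 0 < κ then Real.sin (Real.sqrt κ * θ) / Real.sqrt κ
  else if κ < 0 then Real.sinh (Real.sqrt (-κ) * θ) / Real.sqrt (-κ)
  else θ

/-- The support of the measure `h · 𝓛¹`. -/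
noncomputable def measSupport (h : ℝ → ℝ) : Set ℝ :=
  {x : ℝ | ∀ ε > 0,
    0 < (MeasureTheory.volume.withDensity (fun y => ENNReal.ofReal (h y))) (Metric.ball x ε)}

/-- A one-dimensional `MCP(K,N)` density. -/
def IsMCPDensity (K N : ℝ) (h : ℝ → ℝ) : Prop :=
  (∀ x, 0 ≤ h x) ∧ MeasureTheory.LocallyIntegrable h MeasureTheory.volume ∧
  ∀ x₀ ∈ measSupport h, ∀ x₁ ∈ measSupport h,
    (0 < K → x₀ ≠ x₁ → |x₁ - x₀| < Real.pi / Real.sqrt (K / (N - 1))) ∧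
    ∀ t ∈ Set.Icc (0:ℝ) 1,
      (sKappa (K / (N - 1)) ((1 - t) * |x₁ - x₀|) / sKappa (K / (N - 1)) |x₁ - x₀|) ^ (N - 1)
          * h x₀
        ≤ h (t * x₁ + (1 - t) * x₀)

/-- The model density `h_{K,N,D}`. -/
noncomputable def modelDensity (K N D : ℝ) (x : ℝ) : ℝ :=
  if x ∈ Set.Icc 0 (D / 2) then sKappa (K / (N - 1)) (D - x) ^ (N - 1)
  else if x ∈ Set.Icc (D / 2) D then sKappa (K / (N - 1)) x ^ (N - 1)
  else 0

/-- Locally Lipschitz functions on a subset `I` of the reals. -/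
def LocLipschitzOn (f : ℝ → ℝ) (I : Set ℝ) : Prop :=
  ∀ x ∈ I, ∃ ε > 0, ∃ C : NNReal, LipschitzOnWith C f (I ∩ Metric.ball x ε)

/-- The local Lipschitz slope `|∇f|(x)` relative to `I`. -/
noncomputable def slopeOn (f : ℝ → ℝ) (I : Set ℝ) (x : ℝ) : ℝ :=
  Filter.limsup (fun y => |f y - f x| / |y - x|) (nhdsWithin x (I \ {x}))

/-- The Poincaré constant `λ[h, I]` of the density `h` on `I`. -/
noncomputable def poincareConst (h : ℝ → ℝ) (I : Set ℝ) : ℝ :=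
  sInf { r : ℝ | ∃ f : ℝ → ℝ, LocLipschitzOn f I ∧
    (∫ x in I, f x * h x) = 0 ∧
    (0 < ∫ x in I, (f x) ^ 2 * h x) ∧
    MeasureTheory.IntegrableOn (fun x => (f x) ^ 2 * h x) I ∧
    r = (∫ x in I, (slopeOn f I x) ^ 2 * h x) / (∫ x in I, (f x) ^ 2 * h x) }

section PoincareModel

open Set Topology

section LocallyLipschitz

variable {f : ℝ → ℝ}

theorem LocLipschitzOn.locallyLipschitz (hf : LocLipschitzOn f univ) : LocallyLipschitz f := by
  intro x
  obtain ⟨ε, hε, C, hC⟩ := hf x (mem_univ x)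
  exact ⟨C, Metric.ball x ε, Metric.ball_mem_nhds x hε, by simpa using hC⟩

theorem LocallyLipschitz.locLipschitzOn_univ (hf : LocallyLipschitz f) :
    LocLipschitzOn f univ := by
  intro x _
  obtain ⟨C, t, ht, hC⟩ := hf x
  obtain ⟨ε, hε, hsub⟩ := Metric.mem_nhds_iff.1 ht
  exact ⟨ε, hε, C, hC.mono (by simpa using hsub)⟩

theorem LocallyLipschitz.exists_lipschitzOnWith_Icc (hf : LocallyLipschitz f) (a b : ℝ) :
    ∃ C, LipschitzOnWith C f (Icc a b) :=
  hf.locallyLipschitzOn.exists_lipschitzOnWith_of_compact isCompact_Icc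

theorem LocallyLipschitz.absolutelyContinuousOnInterval (hf : LocallyLipschitz f) (a b : ℝ) :
    AbsolutelyContinuousOnInterval f a b :=
  (hf.exists_lipschitzOnWith_Icc _ _).choose_spec.absolutelyContinuousOnInterval

theorem LocallyLipschitz.ae_differentiableAt (hf : LocallyLipschitz f) :
    ∀ᵐ x, DifferentiableAt ℝ f x := by
  have h : ∀ n : ℕ, ∀ᵐ x, x ∈ uIcc (-(n : ℝ)) n → DifferentiableAt ℝ f x := fun n =>
    (hf.absolutelyContinuousOnInterval _ _).ae_differentiableAt
  filter_upwards [ae_all_iff.2 h] with x hx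
  obtain ⟨n, hn⟩ := exists_nat_ge |x|
  refine hx n ?_
  rw [uIcc_of_le (by linarith [abs_nonneg x])]
  exact abs_le.1 hn

theorem LocallyLipschitz.exists_abs_deriv_le (hf : LocallyLipschitz f) (a b : ℝ) :
    ∃ C, ∀ x ∈ Icc a b, |deriv f x| ≤ C := by
  obtain ⟨C, hC⟩ := hf.exists_lipschitzOnWith_Icc (a - 1) (b + 1)
  refine ⟨C, fun x hx => norm_deriv_le_of_lipschitzOn (Icc_mem_nhds ?_ ?_) hC⟩ <;>
    linarith [hx.1, hx.2]

theorem LocallyLipschitz.intervalIntegrable_deriv_sq (hf : LocallyLipschitz f) (a b : ℝ) :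
    IntervalIntegrable (fun x => deriv f x ^ 2) volume a b := by
  obtain ⟨C, hC⟩ := hf.exists_abs_deriv_le (min a b) (max a b)
  rw [intervalIntegrable_iff]
  refine Measure.integrableOn_of_bounded (M := C ^ 2) (by simp [uIoc])
    ((measurable_deriv f).pow_const 2).aestronglyMeasurable ?_
  filter_upwards [ae_restrict_mem measurableSet_uIoc] with x hx
  rw [Real.norm_of_nonneg (sq_nonneg _)]
  exact sq_le_sq' (neg_le_of_abs_le (hC x (uIoc_subset_uIcc hx)))
    (le_of_abs_le (hC x (uIoc_subset_uIcc hx)))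

theorem slopeOn_univ_eq_abs_of_hasDerivAt {f' x : ℝ} (h : HasDerivAt f f' x) :
    slopeOn f univ x = |f'| := by
  have h1 : Tendsto (fun y => |f y - f x| / |y - x|) (𝓝[≠] x) (𝓝 |f'|) := by
    refine h.tendsto_slope.abs.congr fun y => ?_
    rw [slope_def_field, abs_div]
  rw [slopeOn, ← compl_eq_univ_sdiff]
  exact h1.limsup_eq

theorem LocallyLipschitz.slopeOn_univ_sq_ae_eq (hf : LocallyLipschitz f) :
    ∀ᵐ x, slopeOn f univ x ^ 2 = deriv f x ^ 2 := by
  filter_upwards [hf.ae_differentiableAt] with x hx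
  rw [slopeOn_univ_eq_abs_of_hasDerivAt hx.hasDerivAt, sq_abs]

end LocallyLipschitz

section HalfInterval

variable {k n : ℝ}

theorem hasDerivAt_sin_mul_div (hk : 0 < k) (x : ℝ) :
    HasDerivAt (fun y => Real.sin (k * y) / k) (Real.cos (k * x)) x := by
  have h := ((hasDerivAt_id x).const_mul k).sin.div_const k
  simp only [id, mul_one] at h
  rwa [mul_div_cancel_right₀ _ hk.ne'] at h

theorem hasDerivAt_sin_mul_div_rpow (hk : 0 < k) (hn : 1 ≤ n) (x : ℝ) :
    HasDerivAt (fun y => (Real.sin (k * y) / k) ^ n)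
      (Real.cos (k * x) * n * (Real.sin (k * x) / k) ^ (n - 1)) x :=
  (hasDerivAt_sin_mul_div hk x).rpow_const (Or.inr hn)

/-- The auxiliary function `k s ^ n tan (k x)` of Picone's identity, `s` being the sine weight. -/
noncomputable def piconeWeight (k n x : ℝ) : ℝ :=
  (Real.sin (k * x) / k) ^ n * (k * (Real.sin (k * x) / Real.cos (k * x)))

theorem hasDerivAt_piconeWeight (hk : 0 < k) (hn : 1 ≤ n) {x : ℝ}
    (hs : 0 < Real.sin (k * x)) (hc : 0 < Real.cos (k * x)) :
    HasDerivAt (piconeWeight k n)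
      ((Real.sin (k * x) / k) ^ n * (k ^ 2 * (n + 1 / Real.cos (k * x) ^ 2))) x := by
  have hlin : HasDerivAt (fun y : ℝ => k * y) k x := by simpa using (hasDerivAt_id x).const_mul k
  have h := (hasDerivAt_sin_mul_div_rpow hk hn x).mul
    (((hlin.sin).div (hlin.cos) hc.ne').const_mul k)
  refine h.congr_deriv ?_
  have hpow : (Real.sin (k * x) / k) ^ n
      = (Real.sin (k * x) / k) ^ (n - 1) * (Real.sin (k * x) / k) := by
    rw [← Real.rpow_add_one (by positivity)]; ring_nf
  have hsc := Real.sin_sq_add_cos_sq (k * x)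
  simp only [Pi.div_apply]
  rw [hpow]
  field_simp
  linear_combination hsc

theorem contDiffOn_piconeWeight (hn : 1 ≤ n) {s : Set ℝ}
    (hc : ∀ x ∈ s, Real.cos (k * x) ≠ 0) : ContDiffOn ℝ 1 (piconeWeight k n) s := by
  have hsin : ContDiff ℝ 1 fun x : ℝ => Real.sin (k * x) := by fun_prop
  have hcos : ContDiff ℝ 1 fun x : ℝ => Real.cos (k * x) := by fun_prop
  refine ContDiffOn.mul ?_ (contDiffOn_const.mul (hsin.contDiffOn.div hcos.contDiffOn hc))
  exact ContDiffOn.rpow_const_of_le (m := 1) (hsin.div_const k).contDiffOn (by simpa using hn)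

theorem continuous_sin_mul_div_rpow (hn : 0 ≤ n) :
    Continuous fun x : ℝ => (Real.sin (k * x) / k) ^ n :=
  Continuous.rpow_const (by fun_prop) fun _ => Or.inr hn

theorem LocallyLipschitz.intervalIntegrable_deriv_sq_sub {g w : ℝ → ℝ} (hg : LocallyLipschitz g)
    (hw : Continuous w) (c a b : ℝ) :
    IntervalIntegrable (fun x => (deriv g x ^ 2 - c * g x ^ 2) * w x) volume a b :=
  ((hg.intervalIntegrable_deriv_sq a b).sub
    ((continuous_const.mul (hg.continuous.pow 2)).intervalIntegrable a b)).mul_continuousOn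
      hw.continuousOn

/-- Picone's inequality against the eigenfunction `cos (k x)`, away from its zero. -/
theorem neg_piconeWeight_mul_sq_le_integral (hk : 0 < k) (hn : 1 ≤ n) {g : ℝ → ℝ}
    (hg : LocallyLipschitz g) {b : ℝ} (hb : 0 ≤ b) (hbk : k * b < Real.pi / 2) :
    -(piconeWeight k n b * g b ^ 2) ≤
      ∫ x in (0:ℝ)..b, (deriv g x ^ 2 - k ^ 2 * (n + 1) * g x ^ 2) *
        (Real.sin (k * x) / k) ^ n := by
  have hcos : ∀ x ∈ Icc 0 b, 0 < Real.cos (k * x) := fun x hx =>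
    Real.cos_pos_of_mem_Ioo ⟨by nlinarith [hx.1, Real.pi_pos],
      (mul_le_mul_of_nonneg_left hx.2 hk.le).trans_lt hbk⟩
  have hq : AbsolutelyContinuousOnInterval (piconeWeight k n) 0 b :=
    (contDiffOn_piconeWeight hn fun x hx =>
      (hcos x (by rwa [uIcc_of_le hb] at hx)).ne').absolutelyContinuousOnInterval
  have hgac := hg.absolutelyContinuousOnInterval 0 b
  have hF := hq.fun_mul (hgac.fun_mul hgac)
  have hInt := hF.integral_deriv_eq_sub
  have hFint := hg.intervalIntegrable_deriv_sq_sub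
    (continuous_sin_mul_div_rpow (k := k) (by linarith : 0 ≤ n)) (k ^ 2 * (n + 1)) 0 b
  have hsum : 0 ≤ ∫ x in (0:ℝ)..b, ((deriv g x ^ 2 - k ^ 2 * (n + 1) * g x ^ 2) *
        (Real.sin (k * x) / k) ^ n + deriv (fun y => piconeWeight k n y * (g y * g y)) x) := by
    rw [intervalIntegral.integral_of_le hb]
    refine setIntegral_nonneg_of_ae_restrict ?_
    filter_upwards [ae_restrict_of_ae hg.ae_differentiableAt,
      ae_restrict_mem measurableSet_Ioc] with x hdx hx
    have hc := hcos x ⟨hx.1.le, hx.2⟩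
    have hs : 0 < Real.sin (k * x) := Real.sin_pos_of_pos_of_lt_pi (mul_pos hk hx.1) (by
      nlinarith [hx.2, Real.pi_pos, mul_le_mul_of_nonneg_left hx.2 hk.le])
    have hd := (hasDerivAt_piconeWeight hk hn hs hc).mul (hdx.hasDerivAt.mul hdx.hasDerivAt)
    have hd' : deriv (fun y => piconeWeight k n y * (g y * g y)) x = _ := hd.deriv
    rw [hd', Pi.zero_apply]
    have hsc := Real.sin_sq_add_cos_sq (k * x)
    have hp : 0 ≤ (Real.sin (k * x) / k) ^ n := by positivity
    have key := mul_nonneg hp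
      (sq_nonneg (deriv g x + k * (Real.sin (k * x) / Real.cos (k * x)) * g x))
    refine key.trans_eq ?_
    simp only [piconeWeight, Pi.mul_apply]
    field_simp
    linear_combination k ^ 2 * g x ^ 2 * hsc
  rw [intervalIntegral.integral_add hFint hF.intervalIntegrable_deriv, hInt] at hsum
  have h0 : piconeWeight k n 0 = 0 := by simp [piconeWeight]
  rw [h0] at hsum
  linarith [sq (g b)]

theorem piconeWeight_mul_sq_le (hk : 0 < k) (hn : 0 ≤ n) {g : ℝ → ℝ} {C : NNReal}
    (hg : LipschitzOnWith C g (Icc 0 (Real.pi / (2 * k)))) (hg0 : g (Real.pi / (2 * k)) = 0)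
    {b : ℝ} (hb : b ∈ Ico 0 (Real.pi / (2 * k))) :
    piconeWeight k n b * g b ^ 2 ≤
      (1 / k) ^ n * (C ^ 2 * (Real.pi / 2)) * (Real.pi / (2 * k) - b) := by
  set M := Real.pi / (2 * k) with hM
  have hkM : k * M = Real.pi / 2 := by rw [hM]; field_simp
  have hL : 0 < M - b := sub_pos.2 hb.2
  have hgb : |g b| ≤ C * (M - b) := by
    have h := hg.dist_le_mul b ⟨hb.1, hb.2.le⟩ M ⟨hb.1.trans hb.2.le, le_rfl⟩
    rwa [hg0, Real.dist_eq, Real.dist_eq, sub_zero, abs_sub_comm b M, abs_of_pos hL] at h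
  have hgsq : g b ^ 2 ≤ C ^ 2 * (M - b) ^ 2 := by
    rw [← mul_pow, ← sq_abs]; exact pow_le_pow_left₀ (abs_nonneg _) hgb 2
  have hcos : 2 / Real.pi * (k * (M - b)) ≤ Real.cos (k * b) := by
    have h := Real.mul_le_sin (x := k * (M - b)) (by positivity)
      (by nlinarith [mul_nonneg hk.le hb.1])
    rwa [mul_sub, hkM, Real.sin_pi_div_two_sub, ← hkM, ← mul_sub] at h
  have hpos : 0 < 2 / Real.pi * (k * (M - b)) := by positivity
  have hs0 : 0 ≤ Real.sin (k * b) := Real.sin_nonneg_of_nonneg_of_le_pi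
    (mul_nonneg hk.le hb.1) (by nlinarith [Real.pi_pos, mul_lt_mul_of_pos_left hb.2 hk])
  have htan : k * (Real.sin (k * b) / Real.cos (k * b)) * g b ^ 2
      ≤ C ^ 2 * (Real.pi / 2) * (M - b) := by
    calc k * (Real.sin (k * b) / Real.cos (k * b)) * g b ^ 2
        ≤ k * (1 / (2 / Real.pi * (k * (M - b)))) * (C ^ 2 * (M - b) ^ 2) := by
          gcongr
          exact Real.sin_le_one _
      _ = C ^ 2 * (Real.pi / 2) * (M - b) := by
          have := Real.pi_pos
          field_simp
  have hrp : (Real.sin (k * b) / k) ^ n ≤ (1 / k) ^ n := by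
    refine Real.rpow_le_rpow (by positivity) ?_ hn
    gcongr
    exact Real.sin_le_one _
  calc piconeWeight k n b * g b ^ 2
      = (Real.sin (k * b) / k) ^ n * (k * (Real.sin (k * b) / Real.cos (k * b)) * g b ^ 2) := by
        rw [piconeWeight]; ring
    _ ≤ (1 / k) ^ n * (C ^ 2 * (Real.pi / 2) * (M - b)) := by
        refine mul_le_mul hrp htan ?_ (by positivity)
        have : 0 ≤ Real.cos (k * b) := hpos.le.trans hcos
        positivity
    _ = _ := by ring

/-- The sharp mixed Poincaré inequality for the weight `sin ^ n` on a quarter period. -/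
theorem integral_deriv_sq_sub_nonneg (hk : 0 < k) (hn : 1 ≤ n) {g : ℝ → ℝ}
    (hg : LocallyLipschitz g) (hg0 : g (Real.pi / (2 * k)) = 0) :
    0 ≤ ∫ x in (0:ℝ)..(Real.pi / (2 * k)),
      (deriv g x ^ 2 - k ^ 2 * (n + 1) * g x ^ 2) * (Real.sin (k * x) / k) ^ n := by
  obtain ⟨C, hC⟩ := hg.exists_lipschitzOnWith_Icc 0 (Real.pi / (2 * k))
  set M := Real.pi / (2 * k) with hM
  have hM0 : 0 < M := by positivity
  have hkM : k * M = Real.pi / 2 := by rw [hM]; field_simp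
  have hcont := intervalIntegral.continuous_primitive (hg.intervalIntegrable_deriv_sq_sub
    (continuous_sin_mul_div_rpow (k := k) (by linarith : 0 ≤ n)) (k ^ 2 * (n + 1))) 0
  set Φ : ℝ → ℝ := fun b => ∫ x in (0:ℝ)..b,
    (deriv g x ^ 2 - k ^ 2 * (n + 1) * g x ^ 2) * (Real.sin (k * x) / k) ^ n
  set A : ℝ := (1 / k) ^ n * (C ^ 2 * (Real.pi / 2))
  have hlim : Tendsto (fun b => Φ b + A * (M - b)) (𝓝[<] M) (𝓝 (Φ M)) := by
    have h : Continuous fun b => Φ b + A * (M - b) := by fun_prop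
    simpa using (h.tendsto M).mono_left nhdsWithin_le_nhds
  refine ge_of_tendsto hlim ?_
  filter_upwards [Ioo_mem_nhdsLT hM0] with b hb
  have h1 := neg_piconeWeight_mul_sq_le_integral hk hn hg hb.1.le
    (hkM ▸ mul_lt_mul_of_pos_left hb.2 hk)
  have h2 := piconeWeight_mul_sq_le hk (by linarith : 0 ≤ n) hC hg0 ⟨hb.1.le, hb.2⟩
  change _ ≤ Φ b at h1
  change _ ≤ A * (M - b) at h2
  linarith

end HalfInterval

section PoincareInequality

variable {k n : ℝ}

/-- The sharp Poincaré inequality for the weight `sin ^ n` on a half period. -/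
theorem poincare_inequality_sin_rpow (hk : 0 < k) (hn : 1 ≤ n) {f : ℝ → ℝ}
    (hf : LocallyLipschitz f)
    (hmean : ∫ x in (0:ℝ)..(Real.pi / k), f x * (Real.sin (k * x) / k) ^ n = 0) :
    k ^ 2 * (n + 1) * ∫ x in (0:ℝ)..(Real.pi / k), f x ^ 2 * (Real.sin (k * x) / k) ^ n
      ≤ ∫ x in (0:ℝ)..(Real.pi / k), deriv f x ^ 2 * (Real.sin (k * x) / k) ^ n := by
  have hw : Continuous fun x : ℝ => (Real.sin (k * x) / k) ^ n :=
    continuous_sin_mul_div_rpow (by linarith)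
  set w : ℝ → ℝ := fun x => (Real.sin (k * x) / k) ^ n with hw_def
  set D := Real.pi / k with hD
  set M := Real.pi / (2 * k) with hM
  have hDM : D = 2 * M := by rw [hD, hM]; field_simp
  have hD0 : 0 < D := by positivity
  have hwD : ∀ x, w (D - x) = w x := fun x => by
    rw [hw_def]
    simp only
    rw [mul_sub, hD, mul_div_cancel₀ _ hk.ne', Real.sin_pi_sub]
  set c := k ^ 2 * (n + 1) with hc
  have hc0 : 0 < c := by positivity
  set g : ℝ → ℝ := fun x => f x - f M with hg_def
  have hg : LocallyLipschitz g := hf.sub (LocallyLipschitz.const _)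
  have hgr : LocallyLipschitz fun x => g (D - x) :=
    hg.comp ((LocallyLipschitz.const D).sub LocallyLipschitz.id)
  have hderiv : ∀ x, deriv g x = deriv f x := fun x => by rw [hg_def, deriv_sub_const]
  have hInt := hg.intervalIntegrable_deriv_sq_sub hw c
  have h1 : 0 ≤ ∫ x in (0:ℝ)..M, (deriv g x ^ 2 - c * g x ^ 2) * w x :=
    integral_deriv_sq_sub_nonneg hk hn hg (by simp [hg_def, hM])
  have h2 : 0 ≤ ∫ x in M..D, (deriv g x ^ 2 - c * g x ^ 2) * w x := by
    have h := integral_deriv_sq_sub_nonneg hk hn hgr (by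
      simp only [← hM, hg_def]; rw [show D - M = M by linarith, sub_self])
    have hsub := intervalIntegral.integral_comp_sub_left (a := 0) (b := M)
      (fun x => (deriv g x ^ 2 - c * g x ^ 2) * w x) D
    rw [sub_zero, show D - M = M by linarith] at hsub
    rw [← hsub]
    refine h.trans_eq (intervalIntegral.integral_congr fun x _ => ?_)
    simp only [deriv_comp_const_sub, neg_sq]
    rw [hwD]
  have h3 : 0 ≤ ∫ x in (0:ℝ)..D, (deriv g x ^ 2 - c * g x ^ 2) * w x := by
    rw [← intervalIntegral.integral_add_adjacent_intervals (hInt 0 M) (hInt M D)]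
    exact add_nonneg h1 h2
  have hi1 : IntervalIntegrable (fun x => deriv f x ^ 2 * w x) volume 0 D :=
    (hf.intervalIntegrable_deriv_sq 0 D).mul_continuousOn hw.continuousOn
  have hfc := hf.continuous
  have hi2 : IntervalIntegrable (fun x => f x ^ 2 * w x) volume 0 D :=
    ((hfc.pow 2).mul hw).intervalIntegrable _ _
  have hi3 : IntervalIntegrable (fun x => f x * w x) volume 0 D :=
    (hfc.mul hw).intervalIntegrable _ _
  have hi4 : IntervalIntegrable w volume 0 D := hw.intervalIntegrable _ _
  have hexp : ∫ x in (0:ℝ)..D, (deriv g x ^ 2 - c * g x ^ 2) * w x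
      = (∫ x in (0:ℝ)..D, deriv f x ^ 2 * w x) - c * (∫ x in (0:ℝ)..D, f x ^ 2 * w x)
        + 2 * c * f M * (∫ x in (0:ℝ)..D, f x * w x)
        - c * f M ^ 2 * ∫ x in (0:ℝ)..D, w x := by
    rw [← intervalIntegral.integral_const_mul, ← intervalIntegral.integral_const_mul,
      ← intervalIntegral.integral_const_mul, ← intervalIntegral.integral_sub hi1 (hi2.const_mul _),
      ← intervalIntegral.integral_add (hi1.sub (hi2.const_mul _)) (hi3.const_mul _),
      ← intervalIntegral.integral_sub
        ((hi1.sub (hi2.const_mul _)).add (hi3.const_mul _)) (hi4.const_mul _)]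
    refine intervalIntegral.integral_congr fun x _ => ?_
    simp only [hderiv]
    simp only [hg_def]
    ring
  have hw0 : 0 ≤ ∫ x in (0:ℝ)..D, w x := by
    refine intervalIntegral.integral_nonneg hD0.le fun x hx => ?_
    have hs : 0 ≤ Real.sin (k * x) := Real.sin_nonneg_of_nonneg_of_le_pi
      (mul_nonneg hk.le hx.1) (by rw [← le_div_iff₀' hk]; exact hx.2)
    exact Real.rpow_nonneg (div_nonneg hs hk.le) n
  have hmean' : ∫ x in (0:ℝ)..D, f x * w x = 0 := hmean
  rw [hexp, hmean'] at h3
  have : 0 ≤ c * f M ^ 2 * ∫ x in (0:ℝ)..D, w x := by positivity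
  linarith

end PoincareInequality

section ModelDensity

/-- The model density on its support, written as a single continuous expression. -/
noncomputable def modelWeight (k n D x : ℝ) : ℝ := (Real.sin (k * max x (D - x)) / k) ^ n

variable {k n D : ℝ}

theorem continuous_modelWeight (hn : 0 ≤ n) : Continuous (modelWeight k n D) :=
  Continuous.rpow_const (by fun_prop) fun _ => Or.inr hn

theorem modelWeight_sub (k n D x : ℝ) : modelWeight k n D (D - x) = modelWeight k n D x := by
  rw [modelWeight, modelWeight, sub_sub_cancel, max_comm]

theorem modelWeight_pos (hk : 0 < k) (hD : D ≤ Real.pi / k) {x : ℝ} (hx : x ∈ Ioo 0 D) :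
    0 < modelWeight k n D x := by
  refine Real.rpow_pos_of_pos (div_pos (Real.sin_pos_of_pos_of_lt_pi ?_ ?_) hk) n
  · exact mul_pos hk (hx.1.trans_le (le_max_left _ _))
  · rw [← lt_div_iff₀' hk]
    exact (max_lt hx.2 (by linarith [hx.1])).trans_le hD

theorem modelDensity_eq_indicator {K N : ℝ} (hKN : 0 < K / (N - 1)) (D : ℝ) :
    modelDensity K N D =
      (Icc 0 D).indicator (modelWeight (Real.sqrt (K / (N - 1))) (N - 1) D) := by
  funext x
  simp only [modelDensity, sKappa, if_pos hKN, indicator_apply, modelWeight, mem_Icc]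
  rcases le_total x (D / 2) with h | h
  · rw [max_eq_right (by linarith)]
    by_cases h0 : 0 ≤ x
    · rw [if_pos ⟨h0, h⟩, if_pos ⟨h0, by linarith⟩]
    · rw [if_neg (by tauto), if_neg (by rintro ⟨h1, h2⟩; linarith), if_neg (by tauto)]
  · rw [max_eq_left (by linarith)]
    by_cases hxD : x ≤ D
    · by_cases hx2 : x = D / 2
      · have : D - x = x := by linarith
        by_cases h0 : 0 ≤ x
        · rw [if_pos ⟨h0, hx2.le⟩, if_pos ⟨h0, hxD⟩, this]
        · linarith
      · have : ¬ x ≤ D / 2 := fun h' => hx2 (le_antisymm h' h)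
        rw [if_neg (by tauto), if_pos ⟨h, hxD⟩, if_pos ⟨by linarith, hxD⟩]
    · rw [if_neg (by rintro ⟨h1, h2⟩; linarith), if_neg (by tauto), if_neg (by tauto)]

theorem integral_mul_indicator_Icc {a b : ℝ} (hab : a ≤ b) (φ w : ℝ → ℝ) :
    ∫ x in univ, φ x * (Icc a b).indicator w x = ∫ x in a..b, φ x * w x := by
  have h : (fun x => φ x * (Icc a b).indicator w x) = (Icc a b).indicator fun x => φ x * w x := by
    funext x
    by_cases hx : x ∈ Icc a b <;> simp [hx]
  rw [setIntegral_univ, h, integral_indicator measurableSet_Icc, integral_Icc_eq_integral_Ioc,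
    intervalIntegral.integral_of_le hab]

theorem integral_eq_zero_of_antisymm {φ : ℝ → ℝ} (hφ : ∀ x, φ (D - x) = -φ x) :
    ∫ x in (0:ℝ)..D, φ x = 0 := by
  have h := intervalIntegral.integral_comp_sub_left (a := 0) (b := D) φ D
  simp only [hφ, intervalIntegral.integral_neg, sub_self, sub_zero] at h
  linarith

theorem integral_eq_two_mul_of_symm {φ : ℝ → ℝ} (hc : Continuous φ) (hφ : ∀ x, φ (D - x) = φ x) :
    ∫ x in (0:ℝ)..D, φ x = 2 * ∫ x in (0:ℝ)..(D / 2), φ x := by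
  have h := intervalIntegral.integral_comp_sub_left (a := 0) (b := D / 2) φ D
  simp only [hφ, sub_zero, sub_half] at h
  rw [← intervalIntegral.integral_add_adjacent_intervals (hc.intervalIntegrable 0 (D / 2))
    (hc.intervalIntegrable (D / 2) D), ← h, two_mul]

/-- The set of Rayleigh quotients whose infimum is the Poincaré constant on `ℝ`. -/
def rayleighQuotients (h : ℝ → ℝ) : Set ℝ :=
  {r : ℝ | ∃ f : ℝ → ℝ, LocLipschitzOn f univ ∧
    (∫ x in univ, f x * h x) = 0 ∧
    (0 < ∫ x in univ, (f x) ^ 2 * h x) ∧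
    MeasureTheory.IntegrableOn (fun x => (f x) ^ 2 * h x) univ ∧
    r = (∫ x in univ, (slopeOn f univ x) ^ 2 * h x) / (∫ x in univ, (f x) ^ 2 * h x)}

theorem poincareConst_univ (h : ℝ → ℝ) : poincareConst h univ = sInf (rayleighQuotients h) := rfl

theorem locallyLipschitz_cos_mul (l : ℝ) : LocallyLipschitz fun x => Real.cos (l * x) :=
  ContDiff.locallyLipschitz (𝕂 := ℝ) (by fun_prop)

theorem deriv_cos_mul (l x : ℝ) :
    deriv (fun y => Real.cos (l * y)) x = -(l * Real.sin (l * x)) := by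
  have h := ((hasDerivAt_id x).const_mul l).cos.deriv
  simp only [id, mul_one] at h
  rw [h]; ring

theorem integral_cos_sq_mul_modelWeight_pos (hk : 0 < k) (hn : 0 ≤ n) (hD0 : 0 < D)
    (hD : D ≤ Real.pi / k) {l : ℝ} (hl : l * D = Real.pi) :
    0 < ∫ x in (0:ℝ)..D, Real.cos (l * x) ^ 2 * modelWeight k n D x := by
  have hc : Continuous fun x => Real.cos (l * x) ^ 2 * modelWeight k n D x :=
    Continuous.mul (by fun_prop) (continuous_modelWeight hn)
  have hs : ∀ x, Real.cos (l * (D - x)) ^ 2 * modelWeight k n D (D - x)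
      = Real.cos (l * x) ^ 2 * modelWeight k n D x := fun x => by
    rw [modelWeight_sub, mul_sub, hl, Real.cos_pi_sub, neg_sq]
  have hl0 : 0 < l := by
    have := Real.pi_pos
    rw [← hl] at this
    exact (pos_iff_pos_of_mul_pos this).2 hD0
  rw [integral_eq_two_mul_of_symm hc hs]
  refine mul_pos two_pos (intervalIntegral.intervalIntegral_pos_of_pos_on
    (hc.intervalIntegrable _ _) (fun x hx => ?_) (by linarith))
  have hcos : 0 < Real.cos (l * x) := Real.cos_pos_of_mem_Ioo
    ⟨by nlinarith [mul_pos hl0 hx.1, Real.pi_pos], by nlinarith [mul_lt_mul_of_pos_left hx.2 hl0]⟩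
  exact mul_pos (pow_pos hcos 2) (modelWeight_pos hk hD ⟨hx.1, by linarith [hx.2]⟩)

/-- The Rayleigh quotient of `cos (l x)`, the first Neumann eigenfunction of the flat interval. -/
theorem cos_rayleighQuotient_mem (hk : 0 < k) (hn : 0 ≤ n) (hD0 : 0 < D)
    (hD : D ≤ Real.pi / k) {l : ℝ} (hl : l * D = Real.pi) :
    (∫ x in (0:ℝ)..D, (l * Real.sin (l * x)) ^ 2 * modelWeight k n D x) /
      (∫ x in (0:ℝ)..D, Real.cos (l * x) ^ 2 * modelWeight k n D x) ∈
      rayleighQuotients ((Icc 0 D).indicator (modelWeight k n D)) := by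
  refine ⟨fun x => Real.cos (l * x), (locallyLipschitz_cos_mul l).locLipschitzOn_univ, ?_, ?_, ?_,
    ?_⟩
  · rw [integral_mul_indicator_Icc hD0.le]
    refine integral_eq_zero_of_antisymm fun x => ?_
    rw [modelWeight_sub, mul_sub, hl, Real.cos_pi_sub, neg_mul]
  · rw [integral_mul_indicator_Icc hD0.le (fun x => Real.cos (l * x) ^ 2)]
    exact integral_cos_sq_mul_modelWeight_pos hk hn hD0 hD hl
  · have hc : Continuous fun x => Real.cos (l * x) ^ 2 * modelWeight k n D x :=
      Continuous.mul (by fun_prop) (continuous_modelWeight hn)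
    rw [integrableOn_univ]
    convert! (hc.continuousOn.integrableOn_Icc (μ := volume)
      (a := 0) (b := D)).integrable_indicator measurableSet_Icc using 1
    funext x
    by_cases hx : x ∈ Icc 0 D <;> simp [hx]
  · rw [integral_mul_indicator_Icc hD0.le (fun x => Real.cos (l * x) ^ 2),
      integral_mul_indicator_Icc hD0.le (fun x => slopeOn (fun x => Real.cos (l * x)) univ x ^ 2)]
    congr 1
    refine intervalIntegral.integral_congr_ae ?_
    filter_upwards [(locallyLipschitz_cos_mul l).slopeOn_univ_sq_ae_eq] with x hx _
    rw [hx, deriv_cos_mul, neg_sq]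

theorem rayleighQuotients_bddBelow {h : ℝ → ℝ} (hh : ∀ x, 0 ≤ h x) :
    BddBelow (rayleighQuotients h) := by
  refine ⟨0, ?_⟩
  rintro r ⟨f, -, -, hpos, -, rfl⟩
  exact div_nonneg (integral_nonneg fun x => mul_nonneg (sq_nonneg _) (hh x)) hpos.le

theorem indicator_modelWeight_nonneg (hk : 0 < k) (hD : D ≤ Real.pi / k) (x : ℝ) :
    0 ≤ (Icc 0 D).indicator (modelWeight k n D) x := by
  refine indicator_nonneg (fun y hy => Real.rpow_nonneg (div_nonneg ?_ hk.le) n) x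
  refine Real.sin_nonneg_of_nonneg_of_le_pi ?_ ?_
  · exact mul_nonneg hk.le (hy.1.trans (le_max_left _ _))
  · rw [← le_div_iff₀' hk]
    exact (max_le hy.2 (by linarith [hy.1])).trans hD

/-- The Poincaré constant of the model density of maximal diameter is at least `k ^ 2 (n + 1)`. -/
theorem le_poincareConst_maximal_diameter (hk : 0 < k) (hn : 1 ≤ n) :
    k ^ 2 * (n + 1) ≤
      poincareConst ((Icc 0 (Real.pi / k)).indicator (modelWeight k n (Real.pi / k))) univ := by
  have hD0 : 0 < Real.pi / k := by positivity
  have hw : modelWeight k n (Real.pi / k) = fun x => (Real.sin (k * x) / k) ^ n := by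
    funext x
    rw [modelWeight]
    rcases max_choice x (Real.pi / k - x) with h | h <;> rw [h]
    rw [mul_sub, mul_div_cancel₀ _ hk.ne', Real.sin_pi_sub]
  rw [poincareConst_univ]
  refine le_csInf ⟨_, cos_rayleighQuotient_mem hk (by linarith) hD0 le_rfl
    (mul_div_cancel₀ _ hk.ne')⟩ ?_
  rintro r ⟨f, hf, hmean, hpos, -, rfl⟩
  have hf' := hf.locallyLipschitz
  rw [le_div_iff₀ hpos]
  rw [integral_mul_indicator_Icc hD0.le, hw] at hmean
  rw [integral_mul_indicator_Icc hD0.le (fun x => f x ^ 2),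
    integral_mul_indicator_Icc hD0.le (fun x => slopeOn f univ x ^ 2), hw]
  refine (poincare_inequality_sin_rpow hk hn hf' hmean).trans_eq ?_
  refine intervalIntegral.integral_congr_ae ?_
  filter_upwards [hf'.slopeOn_univ_sq_ae_eq] with x hx _
  rw [hx]

theorem hasDerivAt_sin_mul_cos_pow (hk : 0 < k) (hn : 1 ≤ n) {x : ℝ}
    (hc : 0 < Real.cos (k * x)) :
    HasDerivAt (fun y => Real.sin (k * y) * Real.cos (k * y) ^ 3 * (Real.cos (k * y) / k) ^ n)
      (k * (Real.cos (k * x) ^ 4 - (n + 3) * (Real.sin (k * x) * Real.cos (k * x)) ^ 2) *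
        (Real.cos (k * x) / k) ^ n) x := by
  have hlin : HasDerivAt (fun y : ℝ => k * y) k x := by simpa using (hasDerivAt_id x).const_mul k
  have h := (hlin.sin.mul (hlin.cos.pow 3)).mul ((hlin.cos.div_const k).rpow_const (Or.inr hn))
  refine h.congr_deriv ?_
  have hpow : (Real.cos (k * x) / k) ^ n
      = (Real.cos (k * x) / k) ^ (n - 1) * (Real.cos (k * x) / k) := by
    rw [← Real.rpow_add_one (by positivity)]; ring_nf
  simp only [Pi.mul_apply, Pi.pow_apply]
  rw [hpow]
  field_simp
  push_cast
  ring

theorem integral_cos_test_pos (hk : 0 < k) (hn : 12 ≤ n) :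
    0 < ∫ x in (0:ℝ)..(Real.pi / (4 * k)),
      (k ^ 2 * (n + 1) * Real.cos (2 * k * x) ^ 2 - (2 * k * Real.sin (2 * k * x)) ^ 2) *
        (Real.cos (k * x) / k) ^ n := by
  have hM : 0 < Real.pi / (4 * k) := by positivity
  have hcos : ∀ x ∈ Icc 0 (Real.pi / (4 * k)), 0 < Real.cos (k * x) := fun x hx => by
    have h : k * x ≤ Real.pi / 4 := by
      calc k * x ≤ k * (Real.pi / (4 * k)) := mul_le_mul_of_nonneg_left hx.2 hk.le
        _ = Real.pi / 4 := by field_simp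
    exact Real.cos_pos_of_mem_Ioo
      ⟨by nlinarith [mul_nonneg hk.le hx.1, Real.pi_pos], by linarith [Real.pi_pos]⟩
  have hrc : Continuous fun x : ℝ => (Real.cos (k * x) / k) ^ n :=
    Continuous.rpow_const (by fun_prop) fun _ => Or.inr (by linarith)
  have hGc : Continuous fun x : ℝ => k * (Real.cos (k * x) ^ 4 - (n + 3) *
      (Real.sin (k * x) * Real.cos (k * x)) ^ 2) * (Real.cos (k * x) / k) ^ n :=
    Continuous.mul (by fun_prop) hrc
  have hFc : Continuous fun x : ℝ => (k ^ 2 * (n + 1) * Real.cos (2 * k * x) ^ 2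
      - (2 * k * Real.sin (2 * k * x)) ^ 2) * (Real.cos (k * x) / k) ^ n :=
    Continuous.mul (by fun_prop) hrc
  set α : ℝ := 4 * k * ((n + 5) / (n + 3)) with hα
  have hα0 : 0 ≤ α := by positivity
  have hG : 0 ≤ ∫ x in (0:ℝ)..(Real.pi / (4 * k)), k * (Real.cos (k * x) ^ 4 - (n + 3) *
      (Real.sin (k * x) * Real.cos (k * x)) ^ 2) * (Real.cos (k * x) / k) ^ n := by
    rw [intervalIntegral.integral_eq_sub_of_hasDerivAt (fun x hx =>
      hasDerivAt_sin_mul_cos_pow hk (by linarith) (hcos x (by rwa [uIcc_of_le hM.le] at hx)))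
      (hGc.intervalIntegrable _ _)]
    have hc := hcos _ ⟨hM.le, le_rfl⟩
    have hs : 0 ≤ Real.sin (k * (Real.pi / (4 * k))) := by
      rw [show k * (Real.pi / (4 * k)) = Real.pi / 4 by field_simp]
      exact Real.sin_nonneg_of_nonneg_of_le_pi (by positivity) (by linarith [Real.pi_pos])
    simp only [mul_zero, Real.sin_zero, zero_mul, sub_zero]
    positivity
  have hdiff : 0 < ∫ x in (0:ℝ)..(Real.pi / (4 * k)),
      ((k ^ 2 * (n + 1) * Real.cos (2 * k * x) ^ 2 - (2 * k * Real.sin (2 * k * x)) ^ 2) *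
        (Real.cos (k * x) / k) ^ n - α * (k * (Real.cos (k * x) ^ 4 - (n + 3) *
          (Real.sin (k * x) * Real.cos (k * x)) ^ 2) * (Real.cos (k * x) / k) ^ n)) := by
    refine intervalIntegral.intervalIntegral_pos_of_pos_on
      ((hFc.sub (continuous_const.mul hGc)).intervalIntegrable _ _) (fun x hx => ?_) hM
    have hc := hcos x ⟨hx.1.le, hx.2.le⟩
    have hp : 0 < (Real.cos (k * x) / k) ^ n := by positivity
    have hsc := Real.sin_sq_add_cos_sq (k * x)
    have h2 : 2 * k * x = 2 * (k * x) := by ring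
    have hα3 : α * (n + 3) = 4 * k * (n + 5) := by rw [hα]; field_simp
    have hα5 : α ≤ 5 * k := by
      rw [hα, mul_div_assoc', div_le_iff₀ (by linarith)]; nlinarith
    have hc4 : Real.cos (k * x) ^ 4 ≤ 1 := pow_le_one₀ hc.le (Real.cos_le_one _)
    have hid : (k ^ 2 * (n + 1) * Real.cos (2 * k * x) ^ 2 - (2 * k * Real.sin (2 * k * x)) ^ 2) *
        (Real.cos (k * x) / k) ^ n - α * (k * (Real.cos (k * x) ^ 4 - (n + 3) *
          (Real.sin (k * x) * Real.cos (k * x)) ^ 2) * (Real.cos (k * x) / k) ^ n)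
        = k * (k * (n + 1) - α * Real.cos (k * x) ^ 4) * (Real.cos (k * x) / k) ^ n := by
      have hcs : Real.cos (2 * k * x) ^ 2 = 1 - Real.sin (2 * k * x) ^ 2 := Real.cos_sq' _
      have hsin : Real.sin (2 * k * x) = 2 * Real.sin (k * x) * Real.cos (k * x) := by
        rw [h2, Real.sin_two_mul]
      rw [hcs, hsin]
      linear_combination k * (Real.sin (k * x) * Real.cos (k * x)) ^ 2 *
        (Real.cos (k * x) / k) ^ n * hα3
    rw [hid]
    refine mul_pos (mul_pos hk ?_) hp
    nlinarith [mul_le_mul_of_nonneg_left hc4 hα0]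
  rw [intervalIntegral.integral_sub (hFc.intervalIntegrable _ _)
    ((hGc.intervalIntegrable _ _).const_mul α),
    intervalIntegral.integral_const_mul] at hdiff
  nlinarith [mul_nonneg hα0 hG]

/-- The Poincaré constant of the model density of half the maximal diameter. -/
theorem poincareConst_half_diameter_lt (hk : 0 < k) (hn : 12 ≤ n) :
    poincareConst ((Icc 0 (Real.pi / k / 2)).indicator
      (modelWeight k n (Real.pi / k / 2))) univ < k ^ 2 * (n + 1) := by
  set D := Real.pi / k / 2 with hDdef
  have hD0 : 0 < D := by positivity
  have hD : D ≤ Real.pi / k := half_le_self (by positivity)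
  have hl : 2 * k * D = Real.pi := by rw [hDdef]; field_simp
  have hn0 : 0 ≤ n := by linarith
  rw [poincareConst_univ]
  refine (csInf_le (rayleighQuotients_bddBelow (indicator_modelWeight_nonneg hk hD))
    (cos_rayleighQuotient_mem hk hn0 hD0 hD hl)).trans_lt ?_
  rw [div_lt_iff₀ (integral_cos_sq_mul_modelWeight_pos hk hn0 hD0 hD hl), ← sub_pos,
    ← intervalIntegral.integral_const_mul, ← intervalIntegral.integral_sub]
  rotate_left
  · exact (continuous_const.mul (Continuous.mul (by fun_prop)
      (continuous_modelWeight hn0))).intervalIntegrable _ _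
  · exact (Continuous.mul (by fun_prop) (continuous_modelWeight hn0)).intervalIntegrable _ _
  rw [integral_eq_two_mul_of_symm]
  · refine mul_pos two_pos ((integral_cos_test_pos hk hn).trans_eq ?_)
    have hM : Real.pi / (4 * k) = D / 2 := by rw [hDdef]; field_simp; norm_num
    rw [hM]
    refine intervalIntegral.integral_congr fun x hx => ?_
    rw [uIcc_of_le (by linarith)] at hx
    have hcos : Real.cos (k * x) = Real.sin (k * (D - x)) := by
      rw [mul_sub, show k * D = Real.pi / 2 by linarith, Real.sin_pi_div_two_sub]
    simp only [modelWeight]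
    rw [max_eq_right (by linarith [hx.2]), hcos]
    ring
  · exact (continuous_const.mul (Continuous.mul (by fun_prop) (continuous_modelWeight hn0))).sub
      (Continuous.mul (by fun_prop) (continuous_modelWeight hn0))
  · intro x
    rw [modelWeight_sub, mul_sub, hl, Real.cos_pi_sub, Real.sin_pi_sub, neg_sq]

end ModelDensity

end PoincareModel

/-- For `K > 0` and `N ≥ 13`, `λ[h_{K,N,D_{K,N}/2}] < λ[h_{K,N,D_{K,N}}]`; in particular
`D ↦ λ[h_{K,N,D}]` is not non-increasing on `(0, D_{K,N}]`. -/
theorem stmt_17 (K N : ℝ) (hK : 0 < K) (hN : 13 ≤ N) :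
    poincareConst (modelDensity K N (Real.pi / Real.sqrt (K / (N - 1)) / 2)) Set.univ
        < poincareConst (modelDensity K N (Real.pi / Real.sqrt (K / (N - 1)))) Set.univ ∧
    ¬ AntitoneOn (fun D => poincareConst (modelDensity K N D) Set.univ)
        (Set.Ioc 0 (Real.pi / Real.sqrt (K / (N - 1)))) := by
  have hKN : 0 < K / (N - 1) := div_pos hK (by linarith)
  have hk : 0 < Real.sqrt (K / (N - 1)) := Real.sqrt_pos.2 hKN
  have hlt : poincareConst (modelDensity K N (Real.pi / Real.sqrt (K / (N - 1)) / 2)) Set.univ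
      < poincareConst (modelDensity K N (Real.pi / Real.sqrt (K / (N - 1)))) Set.univ := by
    rw [modelDensity_eq_indicator hKN, modelDensity_eq_indicator hKN]
    exact (poincareConst_half_diameter_lt hk (by linarith)).trans_le
      (le_poincareConst_maximal_diameter hk (by linarith))
  have hD : 0 < Real.pi / Real.sqrt (K / (N - 1)) := div_pos Real.pi_pos hk
  refine ⟨hlt, fun hanti => hlt.not_ge ?_⟩
  exact hanti ⟨half_pos hD, half_le_self hD.le⟩ ⟨hD, le_rfl⟩ (half_le_self hD.le)
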